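/- (Zygmund's estimate.) There exists a constant C > 0 such that for every finitely supported c : ℤ → ℂ, the function u(t,x) = Σ_{k∈ℤ} c(k) e^{−ik²t} e^{ikx} (the free Schrödinger evolution of φ = Σ c(k)e^{ikx}) satisfies ( ∫_𝕋 ∫_𝕋 |u(t,x)|⁴ dx dt )^{1/4} ≤ C ( Σ_{k∈ℤ} |c(k)|² )^{1/2}. -/

import Mathlib

/-! Expanding `|u|⁴ = u u ū ū` gives a finite sum over quadruples `(a, b, d, e)` of frequencies,
whose terms carry the phase `exp(i(d² + e² - a² - b²)t) exp(i(a + b - d - e)x)`. Integration over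
both periods keeps only the quadruples with `a + b = d + e` and `a² + b² = d² + e²`
(`integral_character`). These two equations force `{a, b} = {d, e}` (`resonant_eq`), so the
surviving sum is at most `2 (Σ |c(k)|²)²` (`sum_resonant_le`). -/

noncomputable section

open Real Complex

/-- The free Schrödinger evolution of the trigonometric polynomial `φ = Σ_k c(k)e^{ikx}`:
`u(t,x) = Σ_k c(k) e^{−ik²t} e^{ikx}`. -/
def freeEvolution (c : ℤ → ℂ) (t x : ℝ) : ℂ :=
  ∑' k : ℤ, c k * Complex.exp (-Complex.I * (k : ℂ) ^ 2 * (t : ℂ)) *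
    Complex.exp (Complex.I * (k : ℂ) * (x : ℂ))

/-- The character `s ↦ e^{ins}` of the circle. -/
def character (n : ℤ) (s : ℝ) : ℂ := Complex.exp (Complex.I * (n : ℂ) * (s : ℂ))

lemma continuous_character (n : ℤ) : Continuous (character n) := by
  unfold character; fun_prop

lemma character_add (m n : ℤ) (s : ℝ) :
    character (m + n) s = character m s * character n s := by
  unfold character
  rw [← Complex.exp_add]; push_cast; ring_nf

lemma conj_character (n : ℤ) (s : ℝ) :
    (starRingEnd ℂ) (character n s) = character (-n) s := by
  unfold character
  rw [← Complex.exp_conj]; simp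

lemma integral_character (n : ℤ) :
    ∫ s in (0:ℝ)..(2 * π), character n s = if n = 0 then ((2 * π : ℝ) : ℂ) else 0 := by
  unfold character
  split_ifs with h
  · simp [h]
  · have hn : Complex.I * (n : ℂ) ≠ 0 := mul_ne_zero Complex.I_ne_zero (by exact_mod_cast h)
    rw [integral_exp_mul_complex hn]
    have : Complex.I * (n : ℂ) * ((2 * π : ℝ) : ℂ) = n * (2 * π * Complex.I) := by
      push_cast; ring
    rw [this, Complex.exp_int_mul_two_pi_mul_I]
    simp

/-- A pair of integers is determined up to order by its sum and its sum of squares. -/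
lemma resonant_eq {a b d e : ℤ} (h1 : a + b - d - e = 0) (h2 : d ^ 2 + e ^ 2 - a ^ 2 - b ^ 2 = 0) :
    (a = d ∧ b = e) ∨ (a = e ∧ b = d) := by
  have hb : b = d + e - a := by linarith
  subst hb
  have h : (a - d) * (a - e) = 0 := by linarith
  rcases mul_eq_zero.1 h with h | h
  · left; constructor <;> linarith
  · right; constructor <;> linarith

lemma freeEvolution_eq_sum {c : ℤ → ℂ} (hc : (Function.support c).Finite) (t x : ℝ) :
    freeEvolution c t x =
      ∑ k ∈ hc.toFinset, c k * character (-k ^ 2) t * character k x := by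
  unfold freeEvolution
  rw [tsum_eq_sum (s := hc.toFinset)]
  · refine Finset.sum_congr rfl fun k _ => ?_
    unfold character
    push_cast
    ring_nf
  · intro k hk
    have : c k = 0 := by simpa using hk
    simp [this]

/-- The coefficient `c(a) c(b) c̄(d) c̄(e)` of the quadruple `p = (a, b, d, e)`. -/
def quadCoeff (c : ℤ → ℂ) (p : (ℤ × ℤ) × ℤ × ℤ) : ℂ :=
  c p.1.1 * c p.1.2 * (starRingEnd ℂ (c p.2.1) * starRingEnd ℂ (c p.2.2))

/-- The frequency in `x` of the quadruple `p = (a, b, d, e)`. -/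
def spaceFreq (p : (ℤ × ℤ) × ℤ × ℤ) : ℤ := p.1.1 + p.1.2 - p.2.1 - p.2.2

/-- The frequency in `t` of the quadruple `p = (a, b, d, e)`. -/
def timeFreq (p : (ℤ × ℤ) × ℤ × ℤ) : ℤ := p.2.1 ^ 2 + p.2.2 ^ 2 - p.1.1 ^ 2 - p.1.2 ^ 2

lemma norm_pow_four_eq_sum {c : ℤ → ℂ} (hc : (Function.support c).Finite) (t x : ℝ) :
    ((‖freeEvolution c t x‖ ^ 4 : ℝ) : ℂ) =
      ∑ p ∈ (hc.toFinset ×ˢ hc.toFinset) ×ˢ (hc.toFinset ×ˢ hc.toFinset),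
        quadCoeff c p * character (timeFreq p) t * character (spaceFreq p) x := by
  have h4 : ((‖freeEvolution c t x‖ ^ 4 : ℝ) : ℂ) =
      (freeEvolution c t x * freeEvolution c t x) *
        (starRingEnd ℂ (freeEvolution c t x) * starRingEnd ℂ (freeEvolution c t x)) := by
    have h := Complex.mul_conj' (freeEvolution c t x)
    push_cast
    calc ((‖freeEvolution c t x‖ : ℂ)) ^ 4 = ((‖freeEvolution c t x‖ : ℂ) ^ 2) ^ 2 := by ring
      _ = _ := by rw [← h]; ring
  rw [h4, freeEvolution_eq_sum hc, map_sum, Finset.sum_mul_sum, Finset.sum_mul_sum,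
    ← Finset.sum_product', ← Finset.sum_product', Finset.sum_mul_sum, ← Finset.sum_product']
  refine Finset.sum_congr rfl fun p _ => ?_
  have ht : timeFreq p = -p.1.1 ^ 2 + -p.1.2 ^ 2 + (-(-p.2.1 ^ 2) + -(-p.2.2 ^ 2)) := by
    unfold timeFreq; ring
  have hx : spaceFreq p = p.1.1 + p.1.2 + (-p.2.1 + -p.2.2) := by
    unfold spaceFreq; ring
  rw [ht, hx]
  simp only [character_add, map_mul, conj_character, quadCoeff]
  ring

lemma integral_norm_pow_four {c : ℤ → ℂ} (hc : (Function.support c).Finite) :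
    ((∫ t in (0:ℝ)..(2 * π), ∫ x in (0:ℝ)..(2 * π), ‖freeEvolution c t x‖ ^ 4 : ℝ) : ℂ) =
      ∑ p ∈ (hc.toFinset ×ˢ hc.toFinset) ×ˢ (hc.toFinset ×ˢ hc.toFinset),
        quadCoeff c p * (if timeFreq p = 0 then ((2 * π : ℝ) : ℂ) else 0) *
          (if spaceFreq p = 0 then ((2 * π : ℝ) : ℂ) else 0) := by
  simp only [← intervalIntegral.integral_ofReal, norm_pow_four_eq_sum hc]
  have hx : ∀ t : ℝ, (∫ x in (0:ℝ)..(2 * π),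
      ∑ p ∈ (hc.toFinset ×ˢ hc.toFinset) ×ˢ (hc.toFinset ×ˢ hc.toFinset),
        quadCoeff c p * character (timeFreq p) t * character (spaceFreq p) x) =
      ∑ p ∈ (hc.toFinset ×ˢ hc.toFinset) ×ˢ (hc.toFinset ×ˢ hc.toFinset),
        quadCoeff c p * character (timeFreq p) t *
          (if spaceFreq p = 0 then ((2 * π : ℝ) : ℂ) else 0) := by
    intro t
    rw [intervalIntegral.integral_finsetSum]
    · refine Finset.sum_congr rfl fun p _ => ?_
      rw [intervalIntegral.integral_const_mul, integral_character]
    · intro p _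
      exact (continuous_const.mul (continuous_character _)).intervalIntegrable _ _
  simp only [hx]
  rw [intervalIntegral.integral_finsetSum]
  · refine Finset.sum_congr rfl fun p _ => ?_
    rw [intervalIntegral.integral_mul_const, intervalIntegral.integral_const_mul,
      integral_character]
  · intro p _
    exact ((continuous_const.mul (continuous_character _)).mul
      continuous_const).intervalIntegrable _ _

/-- Each of the two pairings of `(a, b)` with `(d, e)` contributes `(Σ f²)²`. -/
lemma sum_resonant_le (S : Finset ℤ) (f : ℤ → ℝ) :
    ∑ p ∈ (S ×ˢ S) ×ˢ (S ×ˢ S), ((if p.2 = p.1 then (f p.1.1 * f p.1.2) ^ 2 else 0) +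
      (if p.2 = p.1.swap then (f p.1.1 * f p.1.2) ^ 2 else 0)) ≤
      2 * (∑ k ∈ S, f k ^ 2) ^ 2 := by
  have hS : ∑ q ∈ S ×ˢ S, (f q.1 * f q.2) ^ 2 = (∑ k ∈ S, f k ^ 2) ^ 2 := by
    rw [sq (∑ k ∈ S, f k ^ 2), Finset.sum_mul_sum, ← Finset.sum_product']
    exact Finset.sum_congr rfl fun q _ => by ring
  rw [Finset.sum_add_distrib, two_mul, ← hS]
  refine add_le_add ?_ ?_ <;> rw [Finset.sum_product] <;>
    refine Finset.sum_le_sum fun q _ => ?_ <;>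
    simp only [Finset.sum_ite_eq'] <;> split_ifs <;> first | exact le_rfl | positivity

lemma integral_norm_pow_four_le {c : ℤ → ℂ} (hc : (Function.support c).Finite) :
    (∫ t in (0:ℝ)..(2 * π), ∫ x in (0:ℝ)..(2 * π), ‖freeEvolution c t x‖ ^ 4) ≤
      (2 * π) ^ 2 * (2 * (∑ k ∈ hc.toFinset, ‖c k‖ ^ 2) ^ 2) := by
  refine (le_abs_self _).trans ?_
  rw [← Real.norm_eq_abs, ← Complex.norm_real, integral_norm_pow_four hc]
  refine (norm_sum_le _ _).trans ?_
  refine le_trans ?_ (mul_le_mul_of_nonneg_left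
    (sum_resonant_le hc.toFinset (fun k => ‖c k‖)) (by positivity))
  rw [Finset.mul_sum]
  refine Finset.sum_le_sum fun p _ => ?_
  obtain ⟨⟨a, b⟩, d, e⟩ := p
  by_cases h : timeFreq ((a, b), d, e) = 0 ∧ spaceFreq ((a, b), d, e) = 0
  · have hn : ‖((2 * π : ℝ) : ℂ)‖ = 2 * π := by
      rw [Complex.norm_real, Real.norm_of_nonneg (by positivity)]
    rw [if_pos h.1, if_pos h.2, norm_mul, norm_mul, hn]
    have hr : (a = d ∧ b = e) ∨ (a = e ∧ b = d) := resonant_eq h.2 h.1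
    have key : ‖quadCoeff c ((a, b), d, e)‖ = (‖c a‖ * ‖c b‖) ^ 2 := by
      simp only [quadCoeff, norm_mul, RCLike.norm_conj]
      rcases hr with ⟨rfl, rfl⟩ | ⟨rfl, rfl⟩ <;> ring
    have hle : (‖c a‖ * ‖c b‖) ^ 2 ≤
        (if (d, e) = (a, b) then (‖c a‖ * ‖c b‖) ^ 2 else 0) +
          (if (d, e) = (a, b).swap then (‖c a‖ * ‖c b‖) ^ 2 else 0) := by
      rcases hr with ⟨rfl, rfl⟩ | ⟨rfl, rfl⟩
      · rw [if_pos rfl]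
        exact le_add_of_nonneg_right (by split_ifs <;> positivity)
      · rw [if_pos (c := (b, a) = (a, b).swap) rfl]
        exact le_add_of_nonneg_left (by split_ifs <;> positivity)
    rw [key]
    calc (‖c a‖ * ‖c b‖) ^ 2 * (2 * π) * (2 * π) = (2 * π) ^ 2 * (‖c a‖ * ‖c b‖) ^ 2 := by ring
      _ ≤ _ := mul_le_mul_of_nonneg_left hle (by positivity)
  · have h0 : quadCoeff c ((a, b), d, e) *
        (if timeFreq ((a, b), d, e) = 0 then ((2 * π : ℝ) : ℂ) else 0) *
          (if spaceFreq ((a, b), d, e) = 0 then ((2 * π : ℝ) : ℂ) else 0) = 0 := by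
      rcases not_and_or.1 h with h | h <;> simp [h]
    rw [h0, norm_zero]
    refine mul_nonneg (by positivity) (add_nonneg ?_ ?_) <;> split_ifs <;> positivity

/-- **Zygmund's estimate:** `‖V(t)φ‖_{L⁴(𝕋²)} ≲ ‖φ‖_{L²(𝕋)}`, i.e.
`(∫∫ |u|⁴)^{1/4} ≤ C (Σ_k |c(k)|²)^{1/2}` for the free evolution of every trigonometric
polynomial. -/
theorem zygmund_L4_estimate :
    ∃ C > (0:ℝ), ∀ c : ℤ → ℂ, (Function.support c).Finite →
      (∫ t in (0:ℝ)..(2 * π), ∫ x in (0:ℝ)..(2 * π), ‖freeEvolution c t x‖ ^ 4) ^ ((1:ℝ)/4)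
        ≤ C * (∑' k : ℤ, ‖c k‖ ^ 2) ^ ((1:ℝ)/2) := by
  refine ⟨((2 * π) ^ 2 * 2) ^ ((1:ℝ)/4), by positivity, fun c hc => ?_⟩
  have hsum : ∑' k : ℤ, ‖c k‖ ^ 2 = ∑ k ∈ hc.toFinset, ‖c k‖ ^ 2 := by
    refine tsum_eq_sum fun k hk => ?_
    have : c k = 0 := by simpa using hk
    simp [this]
  have hA : 0 ≤ ∑ k ∈ hc.toFinset, ‖c k‖ ^ 2 := by positivity
  have hI : 0 ≤ ∫ t in (0:ℝ)..(2 * π), ∫ x in (0:ℝ)..(2 * π), ‖freeEvolution c t x‖ ^ 4 :=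
    intervalIntegral.integral_nonneg (by positivity) fun t _ =>
      intervalIntegral.integral_nonneg (by positivity) fun x _ => by positivity
  rw [hsum]
  refine (Real.rpow_le_rpow hI (integral_norm_pow_four_le hc) (by norm_num)).trans_eq ?_
  rw [← mul_assoc, Real.mul_rpow (by positivity) (by positivity), ← Real.rpow_natCast_mul hA]
  norm_num
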